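/- For every n ≥ 2 and every p with 1 ≤ p ≤ n, there is a bijection between involutions of length n containing exactly one occurrence of 132 and having p fixed points, and involutions of length n−2 avoiding 132 and having p fixed points. -/

import Mathlib

/-!
Positions are counted from `0`; an excedance is an `x` with `x < f x`.

In an involution, an excedance `x` with a non-excedance `y` to its left gives the occurrence
`(y, x, f x)` of 132. Hence in a 132-avoiding involution of length `2 * c + p` with `p` fixed points
the excedances are exactly the positions `x < c`, and every later position is either fixed or sent
below `c` (`avoid_struct`, `av_facts`).

If there is exactly one occurrence `(i, j, k)`, then inversion preserves it, so `i` is fixed and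
`j`, `k` are exchanged. Removing `j` from the excedances again leaves an initial segment, and it
follows that, in length `2 * c + p + 2`, the excedances are the `x < c` together with `j = c + 1`,
while `i = c` (`once_struct`). Moreover `k` precedes every other fixed point to the right of `c`
(`once_facts`).

The bijection deletes the points `c` and `c + 1` and turns `k`, the partner of `c + 1`, into a fixed
point, which is then the least one (`del`). Its inverse inserts a fixed point `c` and a point `c + 1`
exchanged with the former least fixed point (`ins`); this is where `1 ≤ p` is needed. That
occurrences of 132 behave as required is a finite check over the kinds of points involved
(`ins_kind`, `del_kind`, used in `ins_mem`, `del_mem`), and the number of fixed points is read off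
from the number of excedances by `nExc_nFix`. If `n` is not of the form `2 * c + p + 2`, both sides
are empty.

The argument is carried out for involutions of `ℕ` that are the identity from some point on.
-/

def IsInvolution {n : ℕ} (π : Equiv.Perm (Fin n)) : Prop := ∀ i, π (π i) = i

def Avoids132 {n : ℕ} (π : Equiv.Perm (Fin n)) : Prop :=
  ¬ ∃ i j k : Fin n, i < j ∧ j < k ∧ π i < π k ∧ π k < π j

def fixCount {n : ℕ} (π : Equiv.Perm (Fin n)) : ℕ :=
  (Finset.univ.filter fun i => π i = i).card

def Contains132Once {n : ℕ} (π : Equiv.Perm (Fin n)) : Prop :=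
  (Finset.univ.filter fun t : Fin n × Fin n × Fin n =>
    t.1 < t.2.1 ∧ t.2.1 < t.2.2 ∧ π t.1 < π t.2.2 ∧ π t.2.2 < π t.2.1).card = 1

/-! ### Excedances of involutions of `ℕ` with bounded support -/

/-- The permutation of `Fin n` extended to `ℕ` by the identity above `n`. -/
def natExt {n : ℕ} (π : Equiv.Perm (Fin n)) (x : ℕ) : ℕ :=
  if h : x < n then (π ⟨x, h⟩ : ℕ) else x

/-- Involutions of `ℕ` that are the identity on `[n, ∞)`. -/
def NInv (n : ℕ) (f : ℕ → ℕ) : Prop := (∀ x, f (f x) = x) ∧ ∀ x, n ≤ x → f x = x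

/-- The positions `a < b < d < n` carry an occurrence of 132 in `f`. -/
def Occ (n : ℕ) (f : ℕ → ℕ) (a b d : ℕ) : Prop :=
  a < b ∧ b < d ∧ d < n ∧ f a < f d ∧ f d < f b

/-- The number of fixed points of `f` below `n`. -/
def nFix (n : ℕ) (f : ℕ → ℕ) : ℕ := ((Finset.range n).filter fun x => f x = x).card

/-- The number of excedances of `f` below `n`. -/
def nExc (n : ℕ) (f : ℕ → ℕ) : ℕ := ((Finset.range n).filter fun x => x < f x).card

lemma NInv.lt {n : ℕ} {f : ℕ → ℕ} (hf : NInv n f) {x : ℕ} (hx : x < n) : f x < n := by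
  have h1 := hf.1 x
  have h2 := hf.2 (f x)
  grind

lemma nExc_nFix {n : ℕ} {f : ℕ → ℕ} (hf : NInv n f) : 2 * nExc n f + nFix n f = n := by
  have hD : ((Finset.range n).filter fun x => f x < x).card = nExc n f := by
    refine Finset.card_bij' (fun x _ => f x) (fun x _ => f x) ?_ ?_ ?_ ?_
    · intro x hx
      have := hf.1 x
      have := @NInv.lt n f hf x
      grind
    · intro x hx
      have := hf.1 x
      have := @NInv.lt n f hf x
      grind
    · intro x _
      exact hf.1 x
    · intro x _
      exact hf.1 x
  have h1 := Finset.card_filter_add_card_filter_not (s := Finset.range n) (fun x => x < f x)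
  have h2 := Finset.card_filter_add_card_filter_not
    (s := (Finset.range n).filter fun x => ¬ x < f x) (fun x => f x = x)
  rw [Finset.filter_filter, Finset.filter_filter] at h2
  have h3 : ((Finset.range n).filter fun x => ¬ x < f x ∧ f x = x)
      = (Finset.range n).filter fun x => f x = x := by
    ext x; simp; omega
  have h4 : ((Finset.range n).filter fun x => ¬ x < f x ∧ ¬ f x = x)
      = (Finset.range n).filter fun x => f x < x := by
    ext x; simp; omega
  rw [h3, h4, hD] at h2
  rw [Finset.card_range] at h1
  unfold nExc nFix at *
  omega

lemma eq_range_of_lower (S : Finset ℕ) (h : ∀ x ∈ S, ∀ y < x, y ∈ S) :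
    S = Finset.range S.card := by
  apply Finset.eq_of_subset_of_card_le
  · intro x hx
    have : Finset.range (x + 1) ⊆ S := by
      intro y hy
      rw [Finset.mem_range] at hy
      rcases Nat.lt_succ_iff_lt_or_eq.1 hy with h1 | h1
      · exact h x hx y h1
      · exact h1 ▸ hx
    have := Finset.card_le_card this
    rw [Finset.card_range] at this
    exact Finset.mem_range.2 this
  · simp

/-- A weak non-excedance `y` to the left of an excedance `x` gives the occurrence
`(y, x, f x)` of 132. -/
lemma occ_of_exc {n : ℕ} {f : ℕ → ℕ} (hf : NInv n f) {x y : ℕ} (hyx : y < x) (hx : x < f x)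
    (hy : f y ≤ y) : Occ n f y x (f x) := by
  have h1 := hf.1 x
  have h2 := hf.2 x
  have h3 := @NInv.lt n f hf x
  unfold Occ
  grind

/-- The excedances of a 132-avoiding involution form an initial segment. -/
lemma avoid_struct {n p : ℕ} {f : ℕ → ℕ} (hf : NInv n f) (ha : ∀ a b d, ¬ Occ n f a b d)
    (hp : nFix n f = p) : ∃ c, n = 2 * c + p ∧ ∀ x, x < f x ↔ x < c := by
  have hcard := nExc_nFix hf
  refine ⟨nExc n f, by omega, ?_⟩
  have hS := eq_range_of_lower ((Finset.range n).filter fun x => x < f x) (by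
    intro x hx y hy
    have := @occ_of_exc n f hf x y hy
    have := ha y x (f x)
    grind)
  intro x
  have h1 := Finset.ext_iff.1 hS x
  have h2 := hf.2 x
  rw [Finset.mem_filter, Finset.mem_range, Finset.mem_range] at h1
  unfold nExc
  grind

/-- Shape of an involution with exactly one occurrence of 132: inversion maps the occurrence
`(i, j, k)` to `(f i, f k, f j)`, so `i` is fixed and `j`, `k` are exchanged; moreover `i`, `j` are
the consecutive positions `c`, `c + 1` that follow the excedances other than `j`. -/
lemma once_struct {n p i j k : ℕ} {f : ℕ → ℕ} (hf : NInv n f)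
    (ho : ∀ a b d, Occ n f a b d ↔ a = i ∧ b = j ∧ d = k)
    (hp : nFix n f = p) : ∃ c, n = 2 * c + p + 2 ∧ (∀ x, x < f x ↔ (x < c ∨ x = c + 1)) ∧
      f c = c ∧ i = c ∧ j = c + 1 ∧ k = f (c + 1) := by
  have hcard := nExc_nFix hf
  have hijk : Occ n f i j k := (ho i j k).2 ⟨rfl, rfl, rfl⟩
  have hi1 := hf.1 i
  have hj1 := hf.1 j
  have hk1 := hf.1 k
  obtain ⟨hij, hjk, hkn, hik', hkj'⟩ := hijk
  have hjn := hf.lt (hjk.trans hkn)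
  have hinv : Occ n f (f i) (f k) (f j) := ⟨hik', hkj', hjn, by omega, by omega⟩
  obtain ⟨hfi, hfk, hfj⟩ := (ho _ _ _).1 hinv
  have hne : ∀ x y, y < x → x < f x → f y ≤ y → y = i ∧ x = j := by
    intro x y h1 h2 h3
    have := (ho _ _ _).1 (occ_of_exc hf h1 h2 h3)
    exact ⟨this.1, this.2.1⟩
  set E := (Finset.range n).filter fun x => x < f x with hE
  have hjE : j ∈ E := by
    rw [hE, Finset.mem_filter, Finset.mem_range]; omega
  have hS := eq_range_of_lower (E.erase j) (by
    intro x hx y hy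
    rw [Finset.mem_erase, hE, Finset.mem_filter, Finset.mem_range] at hx ⊢
    have h1 := hne x y hy
    have h2 := hne x i
    omega)
  have hc : (E.erase j).card + 1 = nExc n f := Finset.card_erase_add_one hjE
  generalize (E.erase j).card = c at hS hc
  have hmem : ∀ x, (x ≠ j ∧ x < f x) ↔ x < c := by
    intro x
    have h1 := Finset.ext_iff.1 hS x
    have h2 := hf.2 x
    rw [Finset.mem_erase, hE, Finset.mem_filter, Finset.mem_range, Finset.mem_range] at h1
    grind
  have hic : i = c := by
    have h1 := hmem i
    have h2 := hmem c
    have h3 := hne j c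
    have h4 := hne j i
    grind
  have hjc : j = c + 1 := by
    have h1 := hmem (c + 1)
    have h3 := hne j (c + 1)
    have h4 := hmem j
    grind
  refine ⟨c, by omega, ?_, ?_, hic, hjc, ?_⟩
  · intro x
    have := hmem x
    grind
  · grind
  · grind

/-! ### Inserting and deleting a pair of points -/

/-- The increasing map of `ℕ` that skips the values `c` and `c + 1`. -/
def skip (c x : ℕ) : ℕ := if x < c then x else x + 2

/-- A left inverse of `skip c`. -/
def unskip (c x : ℕ) : ℕ := if x < c then x else x - 2

/-- The least fixed point (`0` if there is none). -/
noncomputable def firstFix (f : ℕ → ℕ) : ℕ := sInf {x | f x = x}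

/-- Insert the two new points `c`, `c + 1`, fix the first and exchange the second with the
(shifted) least fixed point of `f`. -/
noncomputable def ins (c : ℕ) (f : ℕ → ℕ) (x : ℕ) : ℕ :=
  if x = c then c
  else if x = c + 1 then skip c (firstFix f)
  else if x = skip c (firstFix f) then c + 1
  else skip c (f (unskip c x))

/-- Make the partner of `c + 1` a fixed point and delete `c`, `c + 1`. -/
def del (c : ℕ) (g : ℕ → ℕ) (x : ℕ) : ℕ :=
  if skip c x = g (c + 1) then x else unskip c (g (skip c x))

/-- Involutions on `n` letters avoiding 132 with `p` fixed points. -/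
def AvP (n p : ℕ) (f : ℕ → ℕ) : Prop :=
  NInv n f ∧ (∀ a b d, ¬ Occ n f a b d) ∧ nFix n f = p

/-- Involutions on `n` letters with exactly one occurrence of 132 and with `p` fixed points. -/
def OnceP (n p : ℕ) (f : ℕ → ℕ) : Prop :=
  NInv n f ∧ (∃ i j k, ∀ a b d, Occ n f a b d ↔ a = i ∧ b = j ∧ d = k) ∧ nFix n f = p

lemma av_facts {c p : ℕ} {f : ℕ → ℕ} (h : AvP (2 * c + p) p f) :
    (∀ x, x < f x ↔ x < c) ∧ (∀ x, x < c → c ≤ f x) ∧ (∀ x, c ≤ x → f x = x ∨ f x < c) := by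
  obtain ⟨hf, ha, hp⟩ := h
  obtain ⟨c', hc, hE⟩ := avoid_struct hf ha hp
  obtain rfl : c = c' := by omega
  refine ⟨hE, ?_, ?_⟩
  · intro x hx
    have h1 := hE x
    have h2 := hE (f x)
    have h3 := hf.1 x
    grind
  · intro x hx
    have h1 := hE x
    have h2 := hE (f x)
    have h3 := hf.1 x
    grind

lemma firstFix_facts {c p : ℕ} {f : ℕ → ℕ} (hp : 1 ≤ p) (h : AvP (2 * c + p) p f) :
    f (firstFix f) = firstFix f ∧ c ≤ firstFix f ∧ firstFix f < 2 * c + p ∧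
      ∀ x, f x = x → firstFix f ≤ x := by
  have h1 := av_facts h
  obtain ⟨hf, ha, hc⟩ := h
  have hne : ((Finset.range (2 * c + p)).filter fun x => f x = x).Nonempty := by
    rw [← Finset.card_pos]; unfold nFix at hc; omega
  obtain ⟨x, hx⟩ := hne
  rw [Finset.mem_filter, Finset.mem_range] at hx
  have hmin : ∀ x, f x = x → firstFix f ≤ x := fun x hx => Nat.sInf_le hx
  have hm : f (firstFix f) = firstFix f := Nat.sInf_mem (s := {x | f x = x}) ⟨x, hx.2⟩
  refine ⟨hm, ?_, lt_of_le_of_lt (hmin x hx.2) hx.1, hmin⟩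
  have := h1.1 (firstFix f)
  have := h1.2.1 (firstFix f)
  omega

/-- The shape of an involution with exactly one occurrence of 132, in terms of `k = g (c + 1)`: a
point other than `c`, `c + 1`, `k` is sent above `c + 1` if it is below `c`, and otherwise is sent
below `c` or is a fixed point greater than `k`. -/
lemma once_facts {c p : ℕ} {g : ℕ → ℕ} (h : OnceP (2 * c + p + 2) p g) :
    g c = c ∧ c + 1 < g (c + 1) ∧ g (c + 1) < 2 * c + p + 2 ∧ g (g (c + 1)) = c + 1 ∧
    (∀ x, x < c → c + 1 < g x ∧ g x ≠ g (c + 1)) ∧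
    (∀ x, c + 1 < x → g x = x ∨ g x < c ∨ x = g (c + 1)) ∧
    (∀ x, c < x → g x = x → g (c + 1) < x) ∧
    (∀ a b d, Occ (2 * c + p + 2) g a b d → a = c ∧ b = c + 1 ∧ d = g (c + 1)) := by
  obtain ⟨hf, ⟨i, j, k, ho⟩, hp⟩ := h
  obtain ⟨c', hc, hE, hfix, hi, hj, hk⟩ := once_struct hf ho hp
  obtain rfl : c = c' := by omega
  subst hi hj hk
  have h0 := (ho _ _ _).2 ⟨rfl, rfl, rfl⟩
  obtain ⟨h1, h2, h3, h4, h5⟩ := h0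
  have h6 := hf.1 (i + 1)
  refine ⟨hfix, h2, h3, h6, ?_, ?_, ?_, fun a b d => (ho a b d).1⟩
  · intro x hx
    have e1 := hE x
    have e2 := hE (g x)
    have e3 := hf.1 x
    grind
  · intro x hx
    have e1 := hE x
    have e2 := hE (g x)
    have e3 := hf.1 x
    grind
  · intro x hx hgx
    by_contra hlt
    have hne : x ≠ i + 1 := by rintro rfl; omega
    have hne' : x ≠ g (i + 1) := by rintro rfl; omega
    -- A fixed point between `i` and `g (i + 1)` could replace the last point of the occurrence.
    have := (ho i (i + 1) x).1 ⟨by omega, by omega, by omega, by omega, by omega⟩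
    omega

lemma skip_unskip {c x : ℕ} (h1 : x ≠ c) (h2 : x ≠ c + 1) : skip c (unskip c x) = x := by
  unfold skip unskip; grind

lemma unskip_skip (c x : ℕ) : unskip c (skip c x) = x := by
  unfold skip unskip; grind

/-- The values of `ins c f`, in terms of the shifted least fixed point `k`. -/
lemma ins_facts {c p : ℕ} {f : ℕ → ℕ} (hp : 1 ≤ p) (h : AvP (2 * c + p) p f) :
    ∃ k, k = firstFix f + 2 ∧ c + 1 < k ∧ k < 2 * c + p + 2 ∧ ins c f c = c ∧
      ins c f (c + 1) = k ∧ ins c f k = c + 1 ∧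
      (∀ x, x < c → ins c f x = f x + 2 ∧ ins c f x ≠ k ∧ c + 1 < ins c f x) ∧
      (∀ x, c + 1 < x → x ≠ k → ins c f x = x ∧ f (x - 2) = x - 2 ∧ k < x ∨
        ins c f x < c ∧ ins c f x = f (x - 2)) := by
  obtain ⟨h1, h2, h3⟩ := av_facts h
  obtain ⟨m1, m2, m3, m4⟩ := firstFix_facts hp h
  have hinv := h.1.1
  have hk : skip c (firstFix f) = firstFix f + 2 := by unfold skip; grind
  refine ⟨firstFix f + 2, rfl, by omega, by omega, ?_, ?_, ?_, ?_, ?_⟩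
  · simp [ins]
  · simp [ins, hk]
  · unfold ins; grind
  · intro x hx
    have e1 := h2 x hx
    have e2 := hinv x
    have : ins c f x = f x + 2 := by unfold ins skip unskip; grind
    grind
  · intro x hx hxk
    have e1 := h3 (x - 2) (by omega)
    have e2 := m4 (x - 2)
    have : ins c f x = skip c (f (x - 2)) := by unfold ins unskip; grind
    rw [this]
    unfold skip
    grind

/-- The six kinds of points of `g = ins c f`, where `k` is the position in `g` of the least fixed
point of `f`. The witness `x'` is the position in `f` that replaces `x` when an occurrence of 132 is
carried from `g` to `f`; for the new point `c + 1` it is the least fixed point `k - 2` of `f`. -/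
lemma ins_kind {c k : ℕ} {f g : ℕ → ℕ} (hk : f (k - 2) = k - 2)
    (i1 : g c = c) (i2 : g (c + 1) = k) (i3 : g k = c + 1)
    (i4 : ∀ x, x < c → g x = f x + 2 ∧ g x ≠ k ∧ c + 1 < g x)
    (i5 : ∀ x, c + 1 < x → x ≠ k → g x = x ∧ f (x - 2) = x - 2 ∧ k < x ∨
        g x < c ∧ g x = f (x - 2)) (x : ℕ) :
    (∃ x', (x < c ∧ g x = f x' + 2 ∧ c + 1 < g x ∧ g x ≠ k ∧ x' = x) ∨
      (x = c ∧ g x = c) ∨ (x = c + 1 ∧ g x = k ∧ x' = k - 2 ∧ f x' = x') ∨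
      (x = k ∧ g x = c + 1 ∧ x' = k - 2 ∧ f x' = x') ∨
      (k < x ∧ g x = x ∧ x' = x - 2 ∧ f x' = x') ∨
      (c + 1 < x ∧ x ≠ k ∧ g x < c ∧ g x = f x' ∧ x' = x - 2)) := by
  rcases Nat.lt_or_ge x c with h | h
  · obtain ⟨e1, e2, e3⟩ := i4 x h
    exact ⟨x, Or.inl ⟨h, e1, e3, e2, rfl⟩⟩
  by_cases h1 : x = c
  · exact ⟨0, Or.inr (Or.inl ⟨h1, h1 ▸ i1⟩)⟩
  by_cases h2 : x = c + 1
  · exact ⟨k - 2, Or.inr (Or.inr (Or.inl ⟨h2, h2 ▸ i2, rfl, hk⟩))⟩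
  by_cases h3 : x = k
  · exact ⟨k - 2, Or.inr (Or.inr (Or.inr (Or.inl ⟨h3, h3 ▸ i3, rfl, hk⟩)))⟩
  have hx : c + 1 < x := by omega
  rcases i5 x hx h3 with ⟨e1, e2, e3⟩ | ⟨e1, e2⟩
  · exact ⟨x - 2, Or.inr (Or.inr (Or.inr (Or.inr (Or.inl ⟨e3, e1, rfl, e2⟩))))⟩
  · exact ⟨x - 2, Or.inr (Or.inr (Or.inr (Or.inr (Or.inr ⟨hx, h3, e1, e2, rfl⟩))))⟩

lemma ins_mem {c p : ℕ} {f : ℕ → ℕ} (hp : 1 ≤ p) (h : AvP (2 * c + p) p f) :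
    OnceP (2 * c + p + 2) p (ins c f) := by
  obtain ⟨k, hkf, k1, k2, i1, i2, i3, i4, i5⟩ := ins_facts hp h
  have hk : f (k - 2) = k - 2 := by
    rw [hkf]; exact (firstFix_facts hp h).1
  have hinv := h.1.1
  have havoid := h.2.1
  have hid := h.1.2
  generalize ins c f = g at *
  have hI : NInv (2 * c + p + 2) g := by
    constructor
    · intro x
      by_cases h0 : x = c
      · rw [h0, i1, i1]
      by_cases h1 : x = c + 1
      · rw [h1, i2, i3]
      by_cases h2 : x = k
      · rw [h2, i3, i2]
      rcases Nat.lt_or_ge x c with h3 | h3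
      · obtain ⟨e1, e2, e3⟩ := i4 x h3
        have e5 := i5 _ e3 e2
        have e6 : g x - 2 = f x := by omega
        rw [e6, hinv] at e5
        omega
      · rcases i5 x (by omega) h2 with e | ⟨e, e'⟩
        · rw [e.1, e.1]
        · have e5 := i4 _ e
          have e6 := hinv (x - 2)
          rw [← e'] at e6
          omega
    · intro x hx
      have e2 := i5 x
      have e4 := hid (x - 2)
      omega
  refine ⟨hI, ⟨c, c + 1, k, ?_⟩, ?_⟩
  · intro a b d
    constructor
    · rintro ⟨o1, o2, o3, o4, o5⟩
      obtain ⟨a', ha⟩ := @ins_kind c k f g hk i1 i2 i3 i4 i5 a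
      obtain ⟨b', hb⟩ := @ins_kind c k f g hk i1 i2 i3 i4 i5 b
      obtain ⟨d', hd⟩ := @ins_kind c k f g hk i1 i2 i3 i4 i5 d
      have ho := havoid a' b' d'
      unfold Occ at ho
      clear i4 i5 hinv havoid hid hI h
      generalize g a = ga at *
      generalize g b = gb at *
      generalize g d = gd at *
      generalize f a' = fa at *
      generalize f b' = fb at *
      generalize f d' = fd at *
      rcases ha with ha | ha | ha | ha | ha | ha <;> rcases hb with hb | hb | hb | hb | hb | hb <;>
        omega
    · rintro ⟨rfl, rfl, rfl⟩
      unfold Occ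
      omega
  · have := nExc_nFix hI
    have hE : nExc (2 * c + p + 2) g = c + 1 := by
      have : ((Finset.range (2 * c + p + 2)).filter fun x => x < g x)
          = insert (c + 1) (Finset.range c) := by
        ext x
        rw [Finset.mem_filter, Finset.mem_range, Finset.mem_insert, Finset.mem_range]
        obtain ⟨x', hx⟩ := @ins_kind c k f g hk i1 i2 i3 i4 i5 x
        omega
      unfold nExc
      rw [this, Finset.card_insert_of_notMem (by simp), Finset.card_range]
    omega

/-- The four kinds of points of `del c g`; the witness `y` is the corresponding position in `g`. -/
lemma del_kind {c p : ℕ} {g : ℕ → ℕ} (h : OnceP (2 * c + p + 2) p g) (x : ℕ) :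
    ∃ y, (x < c ∧ y = x ∧ g y = del c g x + 2 ∧ c + 1 < g y ∧ g y ≠ g (c + 1)) ∨
      (c ≤ x ∧ y = x + 2 ∧ y = g (c + 1) ∧ g y = c + 1 ∧ del c g x = x) ∨
      (c ≤ x ∧ y = x + 2 ∧ g (c + 1) < y ∧ g y = y ∧ del c g x = x) ∨
      (c ≤ x ∧ y = x + 2 ∧ y ≠ g (c + 1) ∧ g y < c ∧ del c g x = g y) := by
  obtain ⟨g1, g2, g3, g4, g5, g6, g7, g8⟩ := once_facts h
  rcases Nat.lt_or_ge x c with hx | hx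
  · have h1 := g5 x hx
    have h2 : skip c x = x := if_pos hx
    have h3 : del c g x = g x - 2 := by
      unfold del
      rw [h2, if_neg (by omega)]
      exact if_neg (by omega)
    exact ⟨x, by omega⟩
  · have h1 := g6 (x + 2) (by omega)
    have h5 := g7 (x + 2) (by omega)
    have h2 : skip c x = x + 2 := if_neg (by omega)
    refine ⟨x + 2, ?_⟩
    by_cases hk : x + 2 = g (c + 1)
    · have : del c g x = x := by unfold del; rw [h2, if_pos hk]
      rw [← hk] at g4
      omega
    · have h3 : del c g x = unskip c (g (x + 2)) := by unfold del; rw [h2, if_neg hk]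
      unfold unskip at h3
      by_cases h4 : g (x + 2) = x + 2
      · rw [h4, if_neg (by omega)] at h3
        omega
      · rw [if_pos (by omega)] at h3
        omega

lemma del_mem {c p : ℕ} {g : ℕ → ℕ} (h : OnceP (2 * c + p + 2) p g) :
    AvP (2 * c + p) p (del c g) := by
  obtain ⟨g1, g2, g3, g4, g5, g6, g7, g8⟩ := once_facts h
  have hkind := del_kind h
  have hinv := h.1.1
  have hid := h.1.2
  generalize del c g = f at *
  have hI : NInv (2 * c + p) f := by
    constructor
    · intro x
      obtain ⟨y, hy⟩ := hkind x
      rcases hy with hy | hy | hy | hy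
      · obtain ⟨z, hz⟩ := hkind (f x)
        have e1 := hinv y
        rw [hy.2.2.1] at e1
        have : z = f x + 2 := by omega
        rw [← this] at e1
        omega
      · rw [hy.2.2.2.2, hy.2.2.2.2]
      · rw [hy.2.2.2.2, hy.2.2.2.2]
      · obtain ⟨z, hz⟩ := hkind (f x)
        have e1 := hinv y
        have : z = g y := by omega
        rw [← this] at e1
        omega
    · intro x hx
      obtain ⟨y, hy⟩ := hkind x
      have := hid y
      omega
  refine ⟨hI, ?_, ?_⟩
  · rintro a b d ⟨o1, o2, o3, o4, o5⟩
    obtain ⟨a', ha⟩ := hkind a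
    obtain ⟨b', hb⟩ := hkind b
    obtain ⟨d', hd⟩ := hkind d
    have ho := g8 a' b' d'
    -- If the least fixed point plays the role of `2`, the point `c + 1` of `g` replaces it.
    have ho' := g8 a' b' (c + 1)
    unfold Occ at ho ho'
    clear g5 g6 g7 g8 hinv hid hkind h hI
    generalize g a' = ga at *
    generalize g b' = gb at *
    generalize g d' = gd at *
    generalize g (c + 1) = k at *
    generalize f a = fa at *
    generalize f b = fb at *
    generalize f d = fd at *
    rcases ha with ha | ha | ha | ha <;> rcases hb with hb | hb | hb | hb <;>
      rcases hd with hd | hd | hd | hd <;> omega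
  · have := nExc_nFix hI
    have hE : nExc (2 * c + p) f = c := by
      have : ((Finset.range (2 * c + p)).filter fun x => x < f x) = Finset.range c := by
        ext x
        rw [Finset.mem_filter, Finset.mem_range, Finset.mem_range]
        obtain ⟨y, hy⟩ := hkind x
        omega
      unfold nExc
      rw [this, Finset.card_range]
    omega

lemma del_ins {c p : ℕ} {f : ℕ → ℕ} (hp : 1 ≤ p) (h : AvP (2 * c + p) p f) :
    del c (ins c f) = f := by
  obtain ⟨m1, m2, m3, m4⟩ := firstFix_facts hp h
  have hc1 : ins c f (c + 1) = skip c (firstFix f) := by simp [ins]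
  funext x
  unfold del
  rw [hc1]
  split_ifs with hx
  · have := congrArg (unskip c) hx
    rw [unskip_skip, unskip_skip] at this
    rw [this, m1]
  · unfold ins
    have h1 : skip c x ≠ c := by unfold skip; grind
    have h2 : skip c x ≠ c + 1 := by unfold skip; grind
    rw [if_neg h1, if_neg h2, if_neg hx, unskip_skip, unskip_skip]

lemma ins_del {c p : ℕ} {g : ℕ → ℕ} (h : OnceP (2 * c + p + 2) p g) :
    ins c (del c g) = g := by
  obtain ⟨g1, g2, g3, g4, g5, g6, g7, g8⟩ := once_facts h
  have hff : skip c (firstFix (del c g)) = g (c + 1) := by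
    have : firstFix (del c g) = g (c + 1) - 2 := by
      apply le_antisymm
      · apply Nat.sInf_le
        obtain ⟨y, hy⟩ := del_kind h (g (c + 1) - 2)
        change del c g (g (c + 1) - 2) = g (c + 1) - 2
        omega
      · have hne : del c g (g (c + 1) - 2) = g (c + 1) - 2 := by
          obtain ⟨y, hy⟩ := del_kind h (g (c + 1) - 2)
          omega
        have hm : del c g (firstFix (del c g)) = firstFix (del c g) :=
          Nat.sInf_mem (s := {x | del c g x = x}) ⟨_, hne⟩
        obtain ⟨y, hy⟩ := del_kind h (firstFix (del c g))
        omega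
    rw [this]
    unfold skip
    split_ifs <;> omega
  funext x
  unfold ins
  rw [hff]
  split_ifs with h1 h2 h3
  · rw [h1, g1]
  · rw [h2]
  · rw [h3, g4]
  · unfold del
    rw [skip_unskip h1 h2, if_neg h3]
    have hinv := h.1.1
    apply skip_unskip
    · intro e; apply h1; rw [← hinv x, e, g1]
    · intro e; apply h3; rw [← hinv x, e]

/-- Inserting and deleting a pair of points are mutually inverse. -/
lemma nat_equiv (n p : ℕ) (hn : 2 ≤ n) (hp : 1 ≤ p) :
    Nonempty ({f // OnceP n p f} ≃ {f // AvP (n - 2) p f}) := by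
  by_cases hc : ∃ c, n = 2 * c + p + 2
  · obtain ⟨c, rfl⟩ := hc
    exact ⟨{ toFun := fun g => ⟨del c g, del_mem g.2⟩
             invFun := fun f => ⟨ins c f, ins_mem hp f.2⟩
             left_inv := fun g => Subtype.ext (ins_del g.2)
             right_inv := fun f => Subtype.ext (del_ins hp f.2) }⟩
  · have h1 : IsEmpty {f // OnceP n p f} := by
      refine ⟨fun ⟨f, hf, ⟨i, j, k, ho⟩, hcard⟩ => ?_⟩
      obtain ⟨c, hc', _⟩ := once_struct hf ho hcard
      exact hc ⟨c, hc'⟩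
    have h2 : IsEmpty {f // AvP (n - 2) p f} := by
      refine ⟨fun ⟨f, hf, ha, hcard⟩ => ?_⟩
      obtain ⟨c, hc', _⟩ := avoid_struct hf ha hcard
      exact hc ⟨c, by omega⟩
    exact ⟨Equiv.equivOfIsEmpty _ _⟩

/-! ### Transfer between `Fin n` and `ℕ` -/

lemma natExt_val {n : ℕ} (π : Equiv.Perm (Fin n)) (i : Fin n) : natExt π i = (π i : ℕ) := by
  simp [natExt]

lemma natExt_inv {n : ℕ} {π : Equiv.Perm (Fin n)} (h : IsInvolution π) : NInv n (natExt π) := by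
  constructor
  · intro x
    by_cases hx : x < n
    · have := natExt_val π ⟨x, hx⟩
      rw [show natExt π x = (π ⟨x, hx⟩ : ℕ) from this, natExt_val, h]
    · simp [natExt, hx]
  · intro x hx
    simp [natExt, Nat.not_lt.2 hx]

/-- The involution of `Fin n` cut out of an involution of `ℕ` that is the identity above `n`. -/
def ofNat {n : ℕ} {f : ℕ → ℕ} (h : NInv n f) : Equiv.Perm (Fin n) where
  toFun i := ⟨f i, h.lt i.2⟩
  invFun i := ⟨f i, h.lt i.2⟩
  left_inv i := Fin.ext (h.1 i)
  right_inv i := Fin.ext (h.1 i)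

lemma natExt_ofNat {n : ℕ} {f : ℕ → ℕ} (h : NInv n f) : natExt (ofNat h) = f := by
  funext x
  by_cases hx : x < n
  · exact natExt_val (ofNat h) ⟨x, hx⟩
  · simp [natExt, hx, h.2 x (Nat.not_lt.1 hx)]

lemma natExt_injective {n : ℕ} : Function.Injective (natExt (n := n)) := by
  intro π σ h
  ext i
  rw [← natExt_val, ← natExt_val, h]

/-- A property of involutions of `Fin n` may be transferred to extensions by the identity. -/
lemma transfer {n : ℕ} (P : Equiv.Perm (Fin n) → Prop) (Q : (ℕ → ℕ) → Prop)
    (h : ∀ π, P π ↔ Q (natExt π)) :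
    Nonempty ({π : Equiv.Perm (Fin n) // IsInvolution π ∧ P π} ≃ {f // NInv n f ∧ Q f}) := by
  refine ⟨Equiv.ofBijective
    (fun π => ⟨natExt π.1, natExt_inv π.2.1, (h _).1 π.2.2⟩) ⟨?_, ?_⟩⟩
  · intro π σ e
    exact Subtype.ext (natExt_injective (Subtype.ext_iff.1 e))
  · rintro ⟨f, hf, hQ⟩
    refine ⟨⟨ofNat hf, fun i => Fin.ext (hf.1 i), ?_⟩, Subtype.ext (natExt_ofNat hf)⟩
    rw [h, natExt_ofNat]
    exact hQ

lemma occ_natExt {n : ℕ} (π : Equiv.Perm (Fin n)) (a b d : Fin n) :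
    Occ n (natExt π) a b d ↔ a < b ∧ b < d ∧ π a < π d ∧ π d < π b := by
  unfold Occ
  rw [natExt_val, natExt_val, natExt_val]
  have := d.2
  simp only [Fin.lt_def]
  tauto

lemma fixCount_natExt {n : ℕ} (π : Equiv.Perm (Fin n)) :
    fixCount π = nFix n (natExt π) := by
  unfold fixCount nFix
  refine Finset.card_bij (fun i _ => (i : ℕ)) ?_ ?_ ?_
  · intro i hi
    rw [Finset.mem_filter] at hi
    rw [Finset.mem_filter, natExt_val, hi.2]
    exact ⟨Finset.mem_range.2 i.2, rfl⟩
  · intro i _ j _ e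
    exact Fin.ext e
  · intro x hx
    rw [Finset.mem_filter, Finset.mem_range] at hx
    refine ⟨⟨x, hx.1⟩, ?_, rfl⟩
    rw [Finset.mem_filter]
    exact ⟨Finset.mem_univ _, Fin.ext ((natExt_val π ⟨x, hx.1⟩).symm.trans hx.2)⟩

lemma avoids_natExt {n : ℕ} (π : Equiv.Perm (Fin n)) :
    Avoids132 π ↔ ∀ a b d, ¬ Occ n (natExt π) a b d := by
  constructor
  · intro h a b d ho
    have hd : d < n := ho.2.2.1
    have hb : b < n := ho.2.1.trans hd
    have ha : a < n := ho.1.trans hb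
    exact h ⟨⟨a, ha⟩, ⟨b, hb⟩, ⟨d, hd⟩, (occ_natExt π ⟨a, ha⟩ ⟨b, hb⟩ ⟨d, hd⟩).1 ho⟩
  · rintro h ⟨i, j, k, hh⟩
    exact h i j k ((occ_natExt π i j k).2 hh)

lemma once_natExt {n : ℕ} (π : Equiv.Perm (Fin n)) :
    Contains132Once π ↔
      ∃ i j k, ∀ a b d, Occ n (natExt π) a b d ↔ a = i ∧ b = j ∧ d = k := by
  unfold Contains132Once
  rw [Finset.card_eq_one]
  constructor
  · rintro ⟨⟨i, j, k⟩, h⟩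
    have h' : ∀ a b d : Fin n, Occ n (natExt π) a b d ↔ a = i ∧ b = j ∧ d = k := by
      intro a b d
      have := Finset.ext_iff.1 h (a, b, d)
      rw [occ_natExt]
      simpa using this
    refine ⟨i, j, k, fun a b d => ⟨fun ho => ?_, ?_⟩⟩
    · have hd : d < n := ho.2.2.1
      have hb : b < n := ho.2.1.trans hd
      have ha : a < n := ho.1.trans hb
      have := (h' ⟨a, ha⟩ ⟨b, hb⟩ ⟨d, hd⟩).1 ho
      simpa [Fin.ext_iff] using this
    · rintro ⟨rfl, rfl, rfl⟩
      exact (h' i j k).2 ⟨rfl, rfl, rfl⟩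
  · rintro ⟨i, j, k, h⟩
    have ho := (h i j k).2 ⟨rfl, rfl, rfl⟩
    have hd : k < n := ho.2.2.1
    have hb : j < n := ho.2.1.trans hd
    have ha : i < n := ho.1.trans hb
    refine ⟨(⟨i, ha⟩, ⟨j, hb⟩, ⟨k, hd⟩), ?_⟩
    ext ⟨a, b, d⟩
    have := h a b d
    rw [occ_natExt] at this
    simpa [Fin.ext_iff] using this

theorem stmt17 (n p : ℕ) (hn : 2 ≤ n) (hp : 1 ≤ p) (hpn : p ≤ n) :
    Nonempty
      ({π : Equiv.Perm (Fin n) //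
          IsInvolution π ∧ Contains132Once π ∧ fixCount π = p} ≃
       {π : Equiv.Perm (Fin (n - 2)) //
          IsInvolution π ∧ Avoids132 π ∧ fixCount π = p}) := by
  obtain ⟨e1⟩ := transfer (n := n) (fun π => Contains132Once π ∧ fixCount π = p)
    (fun f => (∃ i j k, ∀ a b d, Occ n f a b d ↔ a = i ∧ b = j ∧ d = k) ∧ nFix n f = p)
    (fun π => by rw [once_natExt, fixCount_natExt])
  obtain ⟨e2⟩ := transfer (n := n - 2) (fun π => Avoids132 π ∧ fixCount π = p)
    (fun f => (∀ a b d, ¬ Occ (n - 2) f a b d) ∧ nFix (n - 2) f = p)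
    (fun π => by rw [avoids_natExt, fixCount_natExt])
  obtain ⟨e⟩ := nat_equiv n p hn hp
  exact ⟨(e1.trans e).trans e2.symm⟩
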